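/- The number of n×n alternating sign matrices that are uniquely determined by their antidiagonal X-rays equals the n-th Catalan number C_n = (1/(n+1))·binom(2n, n). -/

import Mathlib

open Finset Matrix

/-- An alternating sign matrix: entries in {-1,0,1}, all row and column sums
equal 1, and consecutive nonzero entries in each row and column have
opposite signs. -/
def IsASM {n : ℕ} (A : Matrix (Fin n) (Fin n) ℤ) : Prop :=
  (∀ i j, A i j = -1 ∨ A i j = 0 ∨ A i j = 1) ∧
  (∀ i, ∑ j, A i j = 1) ∧
  (∀ j, ∑ i, A i j = 1) ∧
  (∀ i (j₁ j₂ : Fin n), j₁ < j₂ → A i j₁ ≠ 0 → A i j₂ ≠ 0 →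
    (∀ j, j₁ < j → j < j₂ → A i j = 0) → A i j₂ = -A i j₁) ∧
  (∀ j (i₁ i₂ : Fin n), i₁ < i₂ → A i₁ j ≠ 0 → A i₂ j ≠ 0 →
    (∀ i, i₁ < i → i < i₂ → A i j = 0) → A i₂ j = -A i₁ j)

/-- The `k`-th antidiagonal sum (1-based: cells `(i,j)` with `i+j = k+1`,
i.e. `0`-based indices with `i+j+1 = k`), for `k = 1, …, 2n-1`. -/
def xray {n : ℕ} (A : Matrix (Fin n) (Fin n) ℤ) (k : ℕ) : ℤ :=
  ∑ i : Fin n, ∑ j : Fin n, if (i : ℕ) + (j : ℕ) + 1 = k then A i j else 0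

/-- `A` is the unique ASM with its X-ray. -/
def DeterminedByXray {n : ℕ} (A : Matrix (Fin n) (Fin n) ℤ) : Prop :=
  ∀ B : Matrix (Fin n) (Fin n) ℤ, IsASM B → (∀ k, xray B k = xray A k) → B = A

/-- The permutation matrix of `σ`. -/
def permMatrix {n : ℕ} (σ : Equiv.Perm (Fin n)) : Matrix (Fin n) (Fin n) ℤ :=
  fun i j => if σ j = i then 1 else 0

/-!
Extend an alternating sign matrix to an infinite one by the identity. Its corner sums `C` are the
arrays that grow by `0` or `1` at each step to the right or down and equal `min i j` outside the
square. The antidiagonal sums of the matrix are the second differences of those of `C`, so the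
X-ray and the antidiagonal sums of `C` determine each other.

Write each antidiagonal `i + j = k` of `C` as the stack of its superlevel sets. Their sizes
determine the antidiagonal sum, and replacing each superlevel set by the leftmost admissible
interval of the same size gives corner sums again. Hence a `C` determined by its antidiagonal sums
is left-justified, and as it is also symmetric, it is `min i j` cut off at its maximum `c k` on the
antidiagonal. The cut-offs `c` that occur count the down steps of Dyck paths. Conversely such a `C`
is determined by its sums: descending through the antidiagonals, each step of the path forces an
inequality between `C` and any competitor, which the equality of the sums turns into equality.
-/

section AntidiagonalSums

variable {M : Type*} [AddCommMonoid M]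

/-- The sum of a two-dimensional array over the antidiagonal `i + j = k`. -/
def antidiagSum (f : ℕ → ℕ → M) (k : ℕ) : M :=
  ∑ p ∈ antidiagonal k, f p.1 p.2

theorem antidiagSum_eq_sum_range (f : ℕ → ℕ → M) (k : ℕ) :
    antidiagSum f k = ∑ j ∈ range (k + 1), f (k - j) j := by
  rw [antidiagSum, Nat.antidiagonal_eq_map', sum_map]
  rfl

theorem antidiagSum_swap (f : ℕ → ℕ → M) : antidiagSum (Function.swap f) = antidiagSum f :=
  funext fun _ ↦ Nat.sum_antidiagonal_swap (f := fun p ↦ f p.1 p.2)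

theorem eq_of_antidiagSum_eq_of_le {f g : ℕ → ℕ → ℕ} {k : ℕ}
    (hle : ∀ i j, i + j = k → f i j ≤ g i j) (hsum : antidiagSum f k = antidiagSum g k)
    {i j : ℕ} (hij : i + j = k) : f i j = g i j :=
  (sum_eq_sum_iff_of_le fun p hp ↦ hle p.1 p.2 (mem_antidiagonal.mp hp)).mp hsum (i, j)
    (mem_antidiagonal.mpr hij)

end AntidiagonalSums

section Superlevel

/-- The columns `j` at which the antidiagonal `i + j = k` of `C` has an entry at least `y`. -/
def superlevel (C : ℕ → ℕ → ℕ) (k y : ℕ) : Finset ℕ :=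
  {j ∈ range (k + 1) | y ≤ C (k - j) j}

variable {C C' : ℕ → ℕ → ℕ} {i j k y : ℕ}

theorem mem_superlevel : j ∈ superlevel C k y ↔ j ≤ k ∧ y ≤ C (k - j) j := by
  rw [superlevel, mem_filter, mem_range, Nat.lt_succ_iff]

theorem mem_superlevel_add : j ∈ superlevel C (i + j) y ↔ y ≤ C i j := by
  rw [mem_superlevel, Nat.add_sub_cancel]
  exact and_iff_right (Nat.le_add_left j i)

theorem sum_eq_sum_card_superlevel {ι : Type*} {s : Finset ι} {f : ι → ℕ} {m : ℕ}
    (hf : ∀ x ∈ s, f x ≤ m) : ∑ x ∈ s, f x = ∑ y ∈ Icc 1 m, #{x ∈ s | y ≤ f x} := by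
  calc ∑ x ∈ s, f x = ∑ x ∈ s, #{y ∈ Icc 1 m | y ≤ f x} := sum_congr rfl fun x hx ↦ by
        rw [show {y ∈ Icc 1 m | y ≤ f x} = Icc 1 (f x) by
          ext y; have := hf x hx; simp only [mem_filter, mem_Icc]; omega, Nat.card_Icc,
          Nat.add_sub_cancel]
    _ = ∑ y ∈ Icc 1 m, #{x ∈ s | y ≤ f x} :=
        sum_card_bipartiteAbove_eq_sum_card_bipartiteBelow fun x y ↦ y ≤ f x

theorem antidiagSum_eq_sum_card_superlevel (hC : ∀ i j, C i j ≤ i) (k : ℕ) :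
    antidiagSum C k = ∑ y ∈ Icc 1 k, #(superlevel C k y) := by
  rw [antidiagSum_eq_sum_range]
  exact sum_eq_sum_card_superlevel fun j _ ↦ (hC _ _).trans (Nat.sub_le k j)

end Superlevel

/-- Corner-sum functions `C i j = ∑ a < i, ∑ b < j, A a b` of the alternating sign matrices `A` of
size `n`, where `A` is extended to an infinite matrix by the identity. -/
structure IsCornerSum (n : ℕ) (C : ℕ → ℕ → ℕ) : Prop where
  le_succ_left (i j : ℕ) : C i j ≤ C (i + 1) j
  succ_left_le (i j : ℕ) : C (i + 1) j ≤ C i j + 1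
  le_succ_right (i j : ℕ) : C i j ≤ C i (j + 1)
  succ_right_le (i j : ℕ) : C i (j + 1) ≤ C i j + 1
  eq_min (i j : ℕ) (h : n ≤ i ∨ n ≤ j) : C i j = min i j

namespace IsCornerSum

variable {n : ℕ} {C : ℕ → ℕ → ℕ} {i j k y : ℕ}

theorem swap (hC : IsCornerSum n C) : IsCornerSum n (Function.swap C) where
  le_succ_left i j := hC.le_succ_right j i
  succ_left_le i j := hC.succ_right_le j i
  le_succ_right i j := hC.le_succ_left j i
  succ_right_le i j := hC.succ_left_le j i
  eq_min i j h := by rw [Function.swap, hC.eq_min j i h.symm, min_comm]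

theorem zero_left (hC : IsCornerSum n C) (j : ℕ) : C 0 j = 0 := by
  have hmono : C 0 j ≤ C 0 (j + n) :=
    monotone_nat_of_le_succ (hC.le_succ_right 0) (Nat.le_add_right j n)
  rw [hC.eq_min 0 (j + n) (.inr (Nat.le_add_left n j))] at hmono
  omega

theorem zero_right (hC : IsCornerSum n C) (i : ℕ) : C i 0 = 0 :=
  hC.swap.zero_left i

theorem le_left (hC : IsCornerSum n C) (i j : ℕ) : C i j ≤ i := by
  induction i with
  | zero => rw [hC.zero_left]
  | succ i ih => exact (hC.succ_left_le i j).trans (Nat.succ_le_succ ih)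

theorem le_right (hC : IsCornerSum n C) (i j : ℕ) : C i j ≤ j :=
  hC.swap.le_left j i

theorem add_le (hC : IsCornerSum n C) (hi : i ≤ n) (hj : j ≤ n) : i + j ≤ C i j + n := by
  have lipschitz (d : ℕ) : C (i + d) j ≤ C i j + d := by
    induction d with
    | zero => rfl
    | succ d ih => exact (hC.succ_left_le (i + d) j).trans (Nat.succ_le_succ ih)
  have := lipschitz (n - i)
  rw [Nat.add_sub_cancel' hi, hC.eq_min n j (.inl le_rfl)] at this
  omega

theorem superlevel_subset_Icc (hC : IsCornerSum n C) (k y : ℕ) :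
    superlevel C k y ⊆ Icc y (k - y) := by
  intro j hj
  rw [mem_superlevel] at hj
  have := hC.le_left (k - j) j
  have := hC.le_right (k - j) j
  rw [mem_Icc]
  omega

theorem card_superlevel_add_two_mul_le (hC : IsCornerSum n C)
    (hne : (superlevel C k y).Nonempty) : #(superlevel C k y) + 2 * y ≤ k + 1 := by
  have hcard := card_le_card (hC.superlevel_subset_Icc k y)
  obtain ⟨j, hj⟩ := hne
  have := mem_Icc.mp (hC.superlevel_subset_Icc k y hj)
  rw [Nat.card_Icc] at hcard
  omega

theorem card_superlevel_lt_succ (hC : IsCornerSum n C) (hne : (superlevel C k y).Nonempty) :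
    #(superlevel C k y) < #(superlevel C (k + 1) y) := by
  refine card_lt_card ((ssubset_iff_of_subset fun j hj ↦ ?_).mpr
    ⟨(superlevel C k y).max' hne + 1, ?_, fun h ↦ ?_⟩)
  · rw [mem_superlevel] at hj ⊢
    rw [Nat.sub_add_comm hj.1]
    exact ⟨by omega, hj.2.trans (hC.le_succ_left _ _)⟩
  · have hmax := max'_mem _ hne
    rw [mem_superlevel] at hmax ⊢
    rw [Nat.add_sub_add_right]
    exact ⟨by omega, hmax.2.trans (hC.le_succ_right _ _)⟩
  · exact (Nat.lt_succ_self _).not_ge (le_max' _ _ h)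

theorem card_superlevel_succ_succ_lt (hC : IsCornerSum n C)
    (hne : (superlevel C (k + 1) (y + 1)).Nonempty) :
    #(superlevel C (k + 1) (y + 1)) < #(superlevel C k y) := by
  have bounds {j} (hj : j ∈ superlevel C (k + 1) (y + 1)) :=
    mem_Icc.mp (hC.superlevel_subset_Icc _ _ hj)
  obtain ⟨m, hm⟩ := Nat.exists_eq_add_of_le' (Nat.one_le_of_lt (bounds (min'_mem _ hne)).1)
  refine card_lt_card ((ssubset_iff_of_subset fun j hj ↦ ?_).mpr ⟨m, ?_, fun h ↦ ?_⟩)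
  · have hjk := bounds hj
    have := hC.succ_left_le (k - j) j
    rw [mem_superlevel, Nat.sub_add_comm (by omega)] at hj
    rw [mem_superlevel]
    omega
  · have hmin := min'_mem _ hne
    rw [hm, mem_superlevel, Nat.add_sub_add_right] at hmin
    have := hC.succ_right_le (k - m) m
    rw [mem_superlevel]
    omega
  · have := min'_le _ _ h
    omega

theorem card_superlevel_succ_add_one_lt (hC : IsCornerSum n C)
    (hne : (superlevel C k (y + 1)).Nonempty) :
    #(superlevel C k (y + 1)) + 1 < #(superlevel C k y) := by
  obtain ⟨m, rfl⟩ : ∃ m, k = m + 1 := by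
    have := hC.card_superlevel_add_two_mul_le hne
    exact ⟨k - 1, by omega⟩
  have hlt := hC.card_superlevel_succ_succ_lt hne
  have := hC.card_superlevel_lt_succ (card_pos.mp (Nat.zero_lt_of_lt hlt))
  omega

end IsCornerSum

section LeftJustify

/-- The rearrangement of each antidiagonal of `C` that turns the superlevel set of every `y ≥ 1`
into the interval of columns of the same size starting at `y`, the leftmost possible position. -/
def leftJustify (C : ℕ → ℕ → ℕ) (i j : ℕ) : ℕ :=
  Nat.findGreatest (fun y ↦ j < y + #(superlevel C (i + j) y)) j

namespace IsCornerSum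

variable {n : ℕ} {C : ℕ → ℕ → ℕ} {i j k y : ℕ}

theorem le_leftJustify_iff (hC : IsCornerSum n C) (hy : 1 ≤ y) :
    y ≤ leftJustify C i j ↔ y ≤ j ∧ j < y + #(superlevel C (i + j) y) := by
  have descend {z} (hyz : y ≤ z) : z ≤ j → j < z + #(superlevel C (i + j) z) →
      j < y + #(superlevel C (i + j) y) := by
    induction z, hyz using Nat.le_induction with
    | base => exact fun _ h ↦ h
    | succ z _ ih =>
      intro hzj hz
      have := hC.card_superlevel_succ_add_one_lt
        (card_pos.mp (by omega : 0 < #(superlevel C (i + j) (z + 1))))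
      exact ih (by omega) (by omega)
  refine ⟨fun h ↦ ?_, fun h ↦ Nat.le_findGreatest h.1 h.2⟩
  have hle : leftJustify C i j ≤ j := Nat.findGreatest_le j
  have hspec : j < leftJustify C i j + #(superlevel C (i + j) (leftJustify C i j)) :=
    Nat.findGreatest_of_ne_zero (P := fun y ↦ j < y + #(superlevel C (i + j) y)) rfl
      (Nat.ne_zero_of_lt (hy.trans h))
  exact ⟨h.trans hle, descend h hle hspec⟩

theorem superlevel_nonempty_of_le_leftJustify (hC : IsCornerSum n C) (hy : 1 ≤ y)
    (h : y ≤ leftJustify C i j) : (superlevel C (i + j) y).Nonempty := by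
  rw [hC.le_leftJustify_iff hy] at h
  exact card_pos.mp (by omega)

theorem leftJustify_le_left (hC : IsCornerSum n C) (i j : ℕ) : leftJustify C i j ≤ i := by
  obtain h0 | hpos := Nat.eq_zero_or_pos (leftJustify C i j)
  · omega
  have := (hC.le_leftJustify_iff hpos).mp le_rfl
  have := hC.card_superlevel_add_two_mul_le
    (hC.superlevel_nonempty_of_le_leftJustify hpos le_rfl)
  omega

theorem leftJustify_le_right (C : ℕ → ℕ → ℕ) (i j : ℕ) : leftJustify C i j ≤ j :=
  Nat.findGreatest_le j

theorem leftJustify_le_of_add_eq (hC : IsCornerSum n C) {i' j' : ℕ} (hij : i' + j' = i + j + 1)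
    (hj : j ≤ j') (hj' : j' ≤ j + 1) : leftJustify C i j ≤ leftJustify C i' j' := by
  obtain h0 | hpos := Nat.eq_zero_or_pos (leftJustify C i j)
  · omega
  have := (hC.le_leftJustify_iff hpos).mp le_rfl
  have := hC.card_superlevel_lt_succ (hC.superlevel_nonempty_of_le_leftJustify hpos le_rfl)
  rw [hC.le_leftJustify_iff hpos, hij]
  omega

theorem leftJustify_le_succ_of_add_eq (hC : IsCornerSum n C) {i' j' : ℕ}
    (hij : i' + j' = i + j + 1) (hj : j ≤ j') (hj' : j' ≤ j + 1) :
    leftJustify C i' j' ≤ leftJustify C i j + 1 := by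
  by_contra! hlt
  have hle := (hC.le_leftJustify_iff (Nat.le_add_left 1 _)).mp hlt
  have hne := hC.superlevel_nonempty_of_le_leftJustify (Nat.le_add_left 1 _) hlt
  rw [hij] at hle hne
  have := hC.card_superlevel_succ_succ_lt hne
  have : leftJustify C i j + 1 ≤ leftJustify C i j := by
    rw [hC.le_leftJustify_iff (Nat.le_add_left 1 _)]
    omega
  omega

theorem Icc_subset_superlevel (hC : IsCornerSum n C) (hij : n ≤ i ∨ n ≤ j) (hi : y ≤ i)
    (hj : y ≤ j) : Icc y (i + j - y) ⊆ superlevel C (i + j) y := by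
  intro l hl
  rw [mem_Icc] at hl
  refine mem_superlevel.mpr ⟨by omega, ?_⟩
  by_cases hout : n ≤ i + j - l ∨ n ≤ l
  · rw [hC.eq_min _ _ hout]
    omega
  · have := hC.add_le (i := i + j - l) (j := l) (by omega) (by omega)
    omega

theorem isCornerSum_leftJustify (hC : IsCornerSum n C) : IsCornerSum n (leftJustify C) where
  le_succ_left i j := hC.leftJustify_le_of_add_eq (by omega) le_rfl (by omega)
  succ_left_le i j := hC.leftJustify_le_succ_of_add_eq (by omega) le_rfl (by omega)
  le_succ_right i j := hC.leftJustify_le_of_add_eq (by omega) (by omega) le_rfl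
  succ_right_le i j := hC.leftJustify_le_succ_of_add_eq (by omega) (by omega) le_rfl
  eq_min i j hij := by
    refine le_antisymm (le_min (hC.leftJustify_le_left i j) (leftJustify_le_right C i j)) ?_
    obtain h0 | hpos := Nat.eq_zero_or_pos (min i j)
    · omega
    have hcard := card_le_card (hC.Icc_subset_superlevel hij (min_le_left i j) (min_le_right i j))
    rw [Nat.card_Icc] at hcard
    rw [hC.le_leftJustify_iff hpos]
    omega

theorem superlevel_leftJustify (hC : IsCornerSum n C) (hy : 1 ≤ y) :
    superlevel (leftJustify C) k y = Ico y (y + #(superlevel C k y)) := by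
  ext j
  rw [mem_superlevel, hC.le_leftJustify_iff hy, mem_Ico]
  constructor
  · rintro ⟨hjk, hj⟩
    rwa [Nat.sub_add_cancel hjk] at hj
  · intro hj
    have := hC.card_superlevel_add_two_mul_le
      (card_pos.mp (by omega : 0 < #(superlevel C k y)))
    have hjk : j ≤ k := by omega
    rw [Nat.sub_add_cancel hjk]
    exact ⟨hjk, hj⟩

theorem antidiagSum_leftJustify (hC : IsCornerSum n C) (k : ℕ) :
    antidiagSum (leftJustify C) k = antidiagSum C k := by
  rw [antidiagSum_eq_sum_card_superlevel hC.le_left,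
    antidiagSum_eq_sum_card_superlevel hC.isCornerSum_leftJustify.le_left]
  refine sum_congr rfl fun y hy ↦ ?_
  rw [hC.superlevel_leftJustify (mem_Icc.mp hy).1, Nat.card_Ico, Nat.add_sub_cancel_left]

end IsCornerSum

end LeftJustify

section DyckProfile

/-- `c k` is the number of down steps among the first `k` steps of a Dyck path of semilength `n`
which, after its `2 * n` steps, is continued by alternating up and down steps forever. -/
structure IsDyckProfile (n : ℕ) (c : ℕ → ℕ) : Prop where
  two_mul_le (k : ℕ) : 2 * c k ≤ k
  le_succ (k : ℕ) : c k ≤ c (k + 1)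
  succ_le (k : ℕ) : c (k + 1) ≤ c k + 1
  eq_half (k : ℕ) (hk : 2 * n ≤ k) : c k = k / 2

/-- The largest corner-sum function whose entries on each antidiagonal `i + j = k` are at most
`c k`. -/
def profileCornerSum (c : ℕ → ℕ) (i j : ℕ) : ℕ :=
  min (min i j) (c (i + j))

theorem profileCornerSum_swap (c : ℕ → ℕ) :
    Function.swap (profileCornerSum c) = profileCornerSum c := by
  funext i j
  simp only [Function.swap, profileCornerSum, min_comm j i, add_comm j i]

variable {n : ℕ} {c : ℕ → ℕ} {C : ℕ → ℕ → ℕ}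

namespace IsDyckProfile

theorem le_add (hc : IsDyckProfile n c) {k : ℕ} (hk : k ≤ 2 * n) : k ≤ c k + n := by
  induction hk using Nat.decreasingInduction with
  | self => have := hc.eq_half (2 * n) le_rfl; omega
  | of_succ k _ ih => have := hc.succ_le k; omega

theorem profileCornerSum_apply_half (hc : IsDyckProfile n c) (k : ℕ) :
    profileCornerSum c (k - k / 2) (k / 2) = c k := by
  have := hc.two_mul_le k
  rw [profileCornerSum, Nat.sub_add_cancel (Nat.div_le_self k 2)]
  omega

theorem isCornerSum (hc : IsDyckProfile n c) : IsCornerSum n (profileCornerSum c) := by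
  have le_succ_left (i j : ℕ) : profileCornerSum c i j ≤ profileCornerSum c (i + 1) j := by
    have := hc.le_succ (i + j)
    simp only [profileCornerSum, Nat.add_right_comm i 1 j]
    omega
  have succ_left_le (i j : ℕ) : profileCornerSum c (i + 1) j ≤ profileCornerSum c i j + 1 := by
    have := hc.succ_le (i + j)
    simp only [profileCornerSum, Nat.add_right_comm i 1 j]
    omega
  refine ⟨le_succ_left, succ_left_le, fun i j ↦ ?_, fun i j ↦ ?_, fun i j hij ↦ ?_⟩
  · rw [← profileCornerSum_swap]
    exact le_succ_left j i
  · rw [← profileCornerSum_swap]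
    exact succ_left_le j i
  · rw [profileCornerSum]
    obtain hk | hk := le_total (i + j) (2 * n)
    · have := hc.le_add hk
      omega
    · have := hc.eq_half _ hk
      omega

end IsDyckProfile

/-- `C` is the only corner-sum function of size `n` with its antidiagonal sums. -/
def DeterminedByAntidiagSum (n : ℕ) (C : ℕ → ℕ → ℕ) : Prop :=
  ∀ C', IsCornerSum n C' → (∀ k, antidiagSum C' k = antidiagSum C k) → C' = C

-- Going down from antidiagonal `k + 1`, where `C'` already agrees with `profileCornerSum c`, to
-- antidiagonal `k`: after an up step `C'` can only be too small, after a down step only too large.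
theorem IsDyckProfile.eq_profileCornerSum_of_succ {C' : ℕ → ℕ → ℕ} {k : ℕ}
    (hc : IsDyckProfile n c) (hC' : IsCornerSum n C')
    (hsum : antidiagSum C' k = antidiagSum (profileCornerSum c) k)
    (hsucc : ∀ i j, i + j = k + 1 → C' i j = profileCornerSum c i j) {i j : ℕ} (hij : i + j = k) :
    C' i j = profileCornerSum c i j := by
  obtain hup | hdown : c (k + 1) = c k ∨ c (k + 1) = c k + 1 := by
    have := hc.le_succ k
    have := hc.succ_le k
    omega
  · refine eq_of_antidiagSum_eq_of_le (fun i j hij ↦ ?_) hsum hij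
    have hnext := hsucc (i + 1) j (by omega)
    rw [profileCornerSum, show i + 1 + j = k + 1 by omega, hup] at hnext
    have := hC'.le_succ_left i j
    have := hC'.le_left i j
    have := hC'.le_right i j
    rw [profileCornerSum, hij]
    omega
  · refine (eq_of_antidiagSum_eq_of_le (fun i j hij ↦ ?_) hsum.symm hij).symm
    have := hc.two_mul_le (k + 1)
    rw [profileCornerSum, hij]
    obtain hlt | hle := Nat.lt_or_ge i j
    · have hnext := hsucc (i + 1) j (by omega)
      rw [profileCornerSum, show i + 1 + j = k + 1 by omega, hdown] at hnext
      have := hC'.succ_left_le i j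
      omega
    · have hnext := hsucc i (j + 1) (by omega)
      rw [profileCornerSum, show i + (j + 1) = k + 1 by omega, hdown] at hnext
      have := hC'.succ_right_le i j
      omega

theorem IsDyckProfile.determinedByAntidiagSum (hc : IsDyckProfile n c) :
    DeterminedByAntidiagSum n (profileCornerSum c) := by
  intro C' hC' hsum
  have hlarge (k : ℕ) (hk : 2 * n ≤ k) (i j : ℕ) (hij : i + j = k) :
      C' i j = profileCornerSum c i j := by
    have hout : n ≤ i ∨ n ≤ j := by omega
    rw [hC'.eq_min i j hout, hc.isCornerSum.eq_min i j hout]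
  have hsmall (k : ℕ) (hk : k ≤ 2 * n) : ∀ i j, i + j = k → C' i j = profileCornerSum c i j := by
    induction hk using Nat.decreasingInduction with
    | self => exact hlarge (2 * n) le_rfl
    | of_succ k _ ih => exact fun i j ↦ hc.eq_profileCornerSum_of_succ hC' (hsum k) ih
  funext i j
  exact (le_total (i + j) (2 * n)).elim (hsmall _ · i j rfl) (hlarge _ · i j rfl)

/-- The largest entry of an array on the antidiagonal `i + j = k`. -/
def antidiagMax (C : ℕ → ℕ → ℕ) (k : ℕ) : ℕ :=
  (antidiagonal k).sup fun p ↦ C p.1 p.2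

theorem le_antidiagMax (C : ℕ → ℕ → ℕ) (i j : ℕ) : C i j ≤ antidiagMax C (i + j) :=
  le_sup (f := fun p : ℕ × ℕ ↦ C p.1 p.2) (mem_antidiagonal.mpr rfl : (i, j) ∈ _)

theorem exists_eq_antidiagMax (C : ℕ → ℕ → ℕ) (k : ℕ) :
    ∃ i j, i + j = k ∧ C i j = antidiagMax C k := by
  obtain ⟨p, hp, hmax⟩ := exists_mem_eq_sup (antidiagonal k) ⟨(0, k), by simp⟩ fun p ↦ C p.1 p.2
  exact ⟨p.1, p.2, mem_antidiagonal.mp hp, hmax.symm⟩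

namespace IsCornerSum

theorem isDyckProfile_antidiagMax (hC : IsCornerSum n C) : IsDyckProfile n (antidiagMax C) := by
  have two_mul_le (k : ℕ) : 2 * antidiagMax C k ≤ k := by
    obtain ⟨i, j, hij, hmax⟩ := exists_eq_antidiagMax C k
    have := hC.le_left i j
    have := hC.le_right i j
    omega
  refine ⟨two_mul_le, fun k ↦ ?_, fun k ↦ ?_, fun k hk ↦ ?_⟩
  · obtain ⟨i, j, rfl, hmax⟩ := exists_eq_antidiagMax C k
    rw [← hmax]
    exact (hC.le_succ_right i j).trans (le_antidiagMax C i (j + 1))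
  · obtain ⟨i, j, hij, hmax⟩ := exists_eq_antidiagMax C (k + 1)
    rw [← hmax]
    rcases j with _ | j
    · rw [hC.zero_right]
      exact Nat.zero_le _
    · obtain rfl : i + j = k := by omega
      exact (hC.succ_right_le i j).trans (Nat.succ_le_succ (le_antidiagMax C i j))
  · have hhalf := le_antidiagMax C (k - k / 2) (k / 2)
    rw [hC.eq_min _ _ (by omega), Nat.sub_add_cancel (Nat.div_le_self k 2)] at hhalf
    have := two_mul_le k
    omega

-- Left-justifying and transposing preserve the antidiagonal sums, hence fix `C`: every nonempty
-- superlevel set starts at column `y` and is symmetric, so it is everything up to column `k - y`.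
theorem eq_profileCornerSum_antidiagMax (hC : IsCornerSum n C)
    (hdet : DeterminedByAntidiagSum n C) : C = profileCornerSum (antidiagMax C) := by
  have hleft : leftJustify C = C := hdet _ hC.isCornerSum_leftJustify hC.antidiagSum_leftJustify
  have hsymm : Function.swap C = C := hdet _ hC.swap fun k ↦ by rw [antidiagSum_swap]
  have le_iff {i j y : ℕ} (hy : 1 ≤ y) : y ≤ C i j ↔ y ≤ j ∧ j < y + #(superlevel C (i + j) y) := by
    rw [← hC.le_leftJustify_iff hy, hleft]
  funext i j
  refine le_antisymm (le_min (le_min (hC.le_left i j) (hC.le_right i j)) (le_antidiagMax C i j)) ?_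
  set y := profileCornerSum (antidiagMax C) i j with hydef
  rw [profileCornerSum] at hydef
  obtain h0 | hpos := Nat.eq_zero_or_pos y
  · omega
  have hcard : 0 < #(superlevel C (i + j) y) := by
    obtain ⟨a, b, hab, hmax⟩ := exists_eq_antidiagMax C (i + j)
    refine card_pos.mpr ⟨b, ?_⟩
    rw [← hab, mem_superlevel_add]
    omega
  have hfirst : y ≤ C (i + j - y) y :=
    (le_iff hpos).mpr ⟨le_rfl, by rw [Nat.sub_add_cancel (by omega)]; omega⟩
  have hlast : y ≤ C y (i + j - y) := by rwa [← hsymm]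
  rw [le_iff hpos, Nat.add_sub_cancel' (by omega)] at hlast
  rw [le_iff hpos]
  omega

end IsCornerSum

theorem bijOn_profileCornerSum (n : ℕ) :
    Set.BijOn profileCornerSum {c | IsDyckProfile n c}
      {C | IsCornerSum n C ∧ DeterminedByAntidiagSum n C} := by
  refine ⟨fun _ hc ↦ ⟨hc.isCornerSum, hc.determinedByAntidiagSum⟩, fun c hc c' hc' h ↦ ?_,
    fun C ⟨hC, hdet⟩ ↦ ⟨antidiagMax C, hC.isDyckProfile_antidiagMax,
      (hC.eq_profileCornerSum_antidiagMax hdet).symm⟩⟩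
  funext k
  rw [← hc.profileCornerSum_apply_half, h, hc'.profileCornerSum_apply_half]

end DyckProfile

section DyckWord

/-- The number of down steps among the first `k` steps of `l`, continued by alternating up and down
steps; the truncated subtraction makes the second summand vanish within `l`. -/
def downProfile (l : List DyckStep) (k : ℕ) : ℕ :=
  (l.take k).count .D + (k - l.length) / 2

/-- The first `m` steps of the path whose number of down steps is counted by `c`. -/
def profileSteps (c : ℕ → ℕ) (m : ℕ) : List DyckStep :=
  (List.range m).map fun k ↦ if c (k + 1) = c k then .U else .D

theorem count_U_add_count_D (l : List DyckStep) : l.count .U + l.count .D = l.length := by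
  induction l with
  | nil => rfl
  | cons s l ih => cases s <;> simp only [List.count_cons, List.length_cons] <;> grind

theorem downProfile_succ {l : List DyckStep} {k : ℕ} (hk : k < l.length) :
    downProfile l (k + 1) = downProfile l k + if l[k] = .D then 1 else 0 := by
  simp only [downProfile, List.take_succ_eq_append_getElem hk, List.count_append,
    List.count_singleton, beq_iff_eq, Nat.sub_eq_zero_of_le hk, Nat.sub_eq_zero_of_le hk.le]
  rfl

theorem downProfile_of_length_le {l : List DyckStep} {k : ℕ} (hk : l.length ≤ k) :
    downProfile l k = l.count .D + (k - l.length) / 2 := by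
  rw [downProfile, List.take_of_length_le hk]

theorem profileSteps_downProfile (l : List DyckStep) :
    profileSteps (downProfile l) l.length = l := by
  refine List.ext_getElem (by simp [profileSteps]) fun k _ hk ↦ ?_
  simp only [profileSteps, List.getElem_map, List.getElem_range, downProfile_succ hk]
  obtain h | h := l[k].dichotomy <;> simp [h]

theorem length_profileSteps (c : ℕ → ℕ) (m : ℕ) : (profileSteps c m).length = m := by
  rw [profileSteps, List.length_map, List.length_range]

theorem take_profileSteps (c : ℕ → ℕ) (k m : ℕ) :
    (profileSteps c m).take k = profileSteps c (min k m) := by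
  rw [profileSteps, ← List.map_take, List.take_range, profileSteps]

namespace IsDyckProfile

variable {n : ℕ} {c : ℕ → ℕ}

theorem count_D_profileSteps (hc : IsDyckProfile n c) (m : ℕ) :
    (profileSteps c m).count .D = c m := by
  induction m with
  | zero =>
    have := hc.two_mul_le 0
    simp only [profileSteps, List.range_zero, List.map_nil, List.count_nil]
    omega
  | succ m ih =>
    have := hc.le_succ m
    have := hc.succ_le m
    rw [profileSteps, List.range_succ, List.map_append, List.count_append, ← profileSteps, ih,
      List.map_singleton]
    split_ifs with h
    · simp [h]
    · simp only [List.count_singleton_self]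
      omega

theorem count_U_profileSteps (hc : IsDyckProfile n c) (m : ℕ) :
    (profileSteps c m).count .U = m - c m := by
  have := count_U_add_count_D (profileSteps c m)
  rw [hc.count_D_profileSteps, length_profileSteps] at this
  omega

theorem downProfile_profileSteps (hc : IsDyckProfile n c) :
    downProfile (profileSteps c (2 * n)) = c := by
  funext k
  rw [downProfile, take_profileSteps, hc.count_D_profileSteps, length_profileSteps]
  obtain hk | hk := le_total k (2 * n)
  · rw [min_eq_left hk]
    omega
  · rw [min_eq_right hk, hc.eq_half _ le_rfl, hc.eq_half k hk]
    omega

/-- The Dyck word of semilength `n` whose down steps are counted by `c`. -/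
def toDyckWord (hc : IsDyckProfile n c) : DyckWord where
  toList := profileSteps c (2 * n)
  count_U_eq_count_D := by
    have := hc.eq_half (2 * n) le_rfl
    rw [hc.count_U_profileSteps, hc.count_D_profileSteps]
    omega
  count_D_le_count_U k := by
    have := hc.two_mul_le (min k (2 * n))
    rw [take_profileSteps, hc.count_U_profileSteps, hc.count_D_profileSteps]
    omega

theorem semilength_toDyckWord (hc : IsDyckProfile n c) : hc.toDyckWord.semilength = n := by
  have := hc.toDyckWord.two_mul_semilength_eq_length
  rw [toDyckWord, length_profileSteps] at this
  exact Nat.eq_of_mul_eq_mul_left two_pos this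

end IsDyckProfile

theorem isDyckProfile_downProfile (p : DyckWord) :
    IsDyckProfile p.semilength (downProfile p.toList) := by
  have hD : p.toList.count .D = p.semilength := p.semilength_eq_count_D.symm
  have hlength := p.two_mul_semilength_eq_length
  refine ⟨fun k ↦ ?_, fun k ↦ ?_, fun k ↦ ?_, fun k hk ↦ ?_⟩
  · have := p.count_D_le_count_U k
    have := count_U_add_count_D (p.toList.take k)
    rw [List.length_take] at this
    rw [downProfile]
    omega
  · obtain hk | hk := Nat.lt_or_ge k p.toList.length
    · exact downProfile_succ hk ▸ Nat.le_add_right _ _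
    · rw [downProfile_of_length_le hk, downProfile_of_length_le (by omega)]
      omega
  · obtain hk | hk := Nat.lt_or_ge k p.toList.length
    · rw [downProfile_succ hk]
      split_ifs <;> omega
    · rw [downProfile_of_length_le hk, downProfile_of_length_le (by omega)]
      omega
  · rw [downProfile_of_length_le (by omega)]
    omega

theorem bijOn_downProfile (n : ℕ) :
    Set.BijOn (fun p : DyckWord ↦ downProfile p.toList) {p | p.semilength = n}
      {c | IsDyckProfile n c} := by
  refine ⟨?_, fun p hp q hq hpq ↦ ?_, fun c hc ↦
    ⟨hc.toDyckWord, hc.semilength_toDyckWord, hc.downProfile_profileSteps⟩⟩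
  · rintro p rfl
    exact isDyckProfile_downProfile p
  · have hlength : p.toList.length = q.toList.length := by
      rw [← p.two_mul_semilength_eq_length, ← q.two_mul_semilength_eq_length, hp.out, hq.out]
    apply DyckWord.ext
    rw [← profileSteps_downProfile p.toList, hlength, ← profileSteps_downProfile q.toList]
    simp only [hpq, profileSteps_downProfile]

end DyckWord

section AlternatingSequence

/-- A sequence any two successive nonzero terms of which are opposite. -/
def IsAlternating {M : Type*} [AddCommGroup M] (f : ℕ → M) : Prop :=
  ∀ ⦃a b⦄, a < b → f a ≠ 0 → f b ≠ 0 → (∀ c, a < c → c < b → f c = 0) → f b = -f a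

namespace IsAlternating

variable {M : Type*} [AddCommGroup M] {f : ℕ → M} {a j : ℕ}

theorem sum_Ico_eq_zero_or_last (hf : IsAlternating f) (haj : a ≤ j) :
    ∑ b ∈ Ico a j, f b = 0 ∨
      ∃ b < j, f b ≠ 0 ∧ (∀ c, b < c → c < j → f c = 0) ∧ ∑ b ∈ Ico a j, f b = f b := by
  induction j, haj using Nat.le_induction with
  | base => simp
  | succ j haj ih =>
    rw [sum_Ico_succ_top haj]
    by_cases hj : f j = 0
    · rw [hj, add_zero]
      refine ih.imp_right fun ⟨b, hbj, hb, hbetween, hsum⟩ ↦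
        ⟨b, by omega, hb, fun c hbc hcj ↦ ?_, hsum⟩
      obtain rfl | hlt := (Nat.lt_succ_iff.mp hcj).eq_or_lt
      exacts [hj, hbetween c hbc hlt]
    · obtain hsum | ⟨b, hbj, hb, hbetween, hsum⟩ := ih
      · exact .inr ⟨j, by omega, hj, fun c _ _ ↦ by omega, by rw [hsum, zero_add]⟩
      · rw [hsum, hf hbj hb hj hbetween, add_neg_cancel]
        exact .inl rfl

variable [LinearOrder M] [IsOrderedAddMonoid M] {r : M} {m : ℕ}

theorem abs_sum_Ico_le (hf : IsAlternating f) (hr : ∀ b, |f b| ≤ r) (haj : a ≤ j) :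
    |∑ b ∈ Ico a j, f b| ≤ r := by
  obtain hsum | ⟨b, -, -, -, hsum⟩ := hf.sum_Ico_eq_zero_or_last haj <;> rw [hsum]
  · exact abs_zero.trans_le ((abs_nonneg _).trans (hr 0))
  · exact hr b

-- Both the sum up to `j` and the sum from `j` on are at most `r`, and they add up to `r`.
theorem sum_range_mem_Icc (hf : IsAlternating f) (hr : ∀ b, |f b| ≤ r)
    (hsum : ∑ b ∈ range m, f b = r) (hjm : j ≤ m) : ∑ b ∈ range j, f b ∈ Set.Icc 0 r := by
  have hbefore := hf.abs_sum_Ico_le hr (Nat.zero_le j)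
  have hafter := hf.abs_sum_Ico_le hr hjm
  rw [← range_eq_Ico] at hbefore
  rw [sum_Ico_eq_sub _ hjm, hsum] at hafter
  exact ⟨(sub_le_self_iff r).mp (le_of_abs_le hafter), le_of_abs_le hbefore⟩

end IsAlternating

theorem isAlternating_of_sum_range_mem_Icc {f : ℕ → ℤ}
    (hf : ∀ j, ∑ b ∈ range j, f b ∈ Set.Icc 0 1) : IsAlternating f := by
  intro a b hab ha hb hbetween
  have hconst : ∑ c ∈ range (a + 1), f c = ∑ c ∈ range b, f c := by
    rw [← sum_range_add_sum_Ico f (Nat.succ_le_of_lt hab), left_eq_add]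
    exact sum_eq_zero fun c hc ↦ hbetween c (mem_Ico.mp hc).1 (mem_Ico.mp hc).2
  have hstart := hf a
  have hmid := hf (a + 1)
  have hend := hf (b + 1)
  rw [sum_range_succ, ← hconst] at hend
  rw [sum_range_succ] at hmid hend
  simp only [Set.mem_Icc] at hstart hmid hend
  omega

end AlternatingSequence

section IdentityExtension

variable {n : ℕ}

theorem IsASM.transpose {A : Matrix (Fin n) (Fin n) ℤ} (hA : IsASM A) : IsASM Aᵀ :=
  ⟨fun i j ↦ hA.1 j i, hA.2.2.1, hA.2.1, hA.2.2.2.2, hA.2.2.2.1⟩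

/-- The extension of a square matrix to an infinite one by the identity matrix. -/
def identityExtension (A : Matrix (Fin n) (Fin n) ℤ) (a b : ℕ) : ℤ :=
  if h : a < n ∧ b < n then A ⟨a, h.1⟩ ⟨b, h.2⟩ else if a = b then 1 else 0

theorem identityExtension_fin (A : Matrix (Fin n) (Fin n) ℤ) (i j : Fin n) :
    identityExtension A i j = A i j :=
  dif_pos ⟨i.2, j.2⟩

theorem identityExtension_of_not_lt (A : Matrix (Fin n) (Fin n) ℤ) {a b : ℕ}
    (h : ¬(a < n ∧ b < n)) : identityExtension A a b = if a = b then 1 else 0 :=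
  dif_neg h

theorem identityExtension_transpose (A : Matrix (Fin n) (Fin n) ℤ) (a b : ℕ) :
    identityExtension Aᵀ a b = identityExtension A b a := by
  simp only [identityExtension, transpose_apply, and_comm, eq_comm]

namespace IsASM

variable {A : Matrix (Fin n) (Fin n) ℤ}

theorem abs_identityExtension_le_one (hA : IsASM A) (a b : ℕ) : |identityExtension A a b| ≤ 1 := by
  rw [identityExtension]
  split_ifs with h
  · obtain h | h | h := hA.1 ⟨a, h.1⟩ ⟨b, h.2⟩ <;> simp [h]
  all_goals simp

theorem isAlternating_identityExtension (hA : IsASM A) (a : ℕ) :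
    IsAlternating (identityExtension A a) := by
  intro b c hbc hb hc hbetween
  obtain ha | ha := Nat.lt_or_ge a n
  · have lt_of_ne_zero {d} (hd : identityExtension A a d ≠ 0) : d < n := by
      by_contra hdn
      rw [identityExtension_of_not_lt A (by omega), if_neg (by omega)] at hd
      exact hd rfl
    lift a to Fin n using ha
    lift b to Fin n using lt_of_ne_zero hb
    lift c to Fin n using lt_of_ne_zero hc
    simp only [identityExtension_fin] at hb hc ⊢
    exact hA.2.2.2.1 a b c hbc hb hc fun d hbd hdc ↦
      identityExtension_fin A a d ▸ hbetween d hbd hdc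
  · rw [identityExtension_of_not_lt A (by omega)] at hb hc
    rw [← (ite_ne_right_iff.mp hb).1, ← (ite_ne_right_iff.mp hc).1] at hbc
    exact absurd hbc (lt_irrefl a)

theorem sum_range_identityExtension (hA : IsASM A) (a : ℕ) {j : ℕ} (hj : n ≤ j) :
    ∑ b ∈ range j, identityExtension A a b = if a < j then 1 else 0 := by
  obtain ha | ha := Nat.lt_or_ge a n
  · lift a to Fin n using ha
    rw [← sum_range_add_sum_Ico _ hj, sum_range, sum_eq_zero (s := Ico n j) fun b hb ↦ ?_]
    · simp only [identityExtension_fin, hA.2.1 a, add_zero, if_pos (a.2.trans_le hj)]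
    · have := (mem_Ico.mp hb).1
      rw [identityExtension_of_not_lt A (by omega), if_neg (by omega)]
  · rw [sum_congr rfl fun b _ ↦ identityExtension_of_not_lt A (by omega)]
    simp only [sum_ite_eq, mem_range]

theorem sum_range_identityExtension_mem_Icc (hA : IsASM A) (a j : ℕ) :
    ∑ b ∈ range j, identityExtension A a b ∈ Set.Icc 0 1 := by
  refine (hA.isAlternating_identityExtension a).sum_range_mem_Icc
    (hA.abs_identityExtension_le_one a) (m := max j (max n (a + 1))) ?_ (le_max_left _ _)
  rw [hA.sum_range_identityExtension a (by omega), if_pos (by omega)]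

end IsASM

end IdentityExtension

section CornerSum

variable {M : Type*} [AddCommMonoid M]

/-- The sum of the entries of `f` in its first `i` rows and first `j` columns. -/
def cornerSum (f : ℕ → ℕ → M) (i j : ℕ) : M :=
  ∑ a ∈ range i, ∑ b ∈ range j, f a b

theorem cornerSum_succ_left (f : ℕ → ℕ → M) (i j : ℕ) :
    cornerSum f (i + 1) j = cornerSum f i j + ∑ b ∈ range j, f i b :=
  sum_range_succ _ i

theorem cornerSum_swap (f : ℕ → ℕ → M) (i j : ℕ) :
    cornerSum (Function.swap f) i j = cornerSum f j i :=
  sum_comm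

end CornerSum

section CornerSumMatrix

/-- The mixed second difference of `C`, which inverts `cornerSum`. -/
def mixedDiff (C : ℕ → ℕ → ℕ) (i j : ℕ) : ℤ :=
  (C (i + 1) (j + 1) - C i (j + 1)) - (C (i + 1) j - C i j)

theorem mixedDiff_swap (C : ℕ → ℕ → ℕ) (i j : ℕ) :
    mixedDiff (Function.swap C) i j = mixedDiff C j i := by
  simp only [mixedDiff, Function.swap]
  ring

theorem mixedDiff_eq_of_forall_eq_cornerSum {C : ℕ → ℕ → ℕ} {f : ℕ → ℕ → ℤ}
    (hC : ∀ i j, (C i j : ℤ) = cornerSum f i j) : mixedDiff C = f := by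
  funext i j
  simp only [mixedDiff, hC, cornerSum_succ_left, sum_range_succ]
  ring

/-- The matrix of size `n` whose corner sums are given by `C`. -/
def cornerSumMatrix (n : ℕ) (C : ℕ → ℕ → ℕ) : Matrix (Fin n) (Fin n) ℤ :=
  Matrix.of fun i j ↦ mixedDiff C i j

theorem transpose_cornerSumMatrix (n : ℕ) (C : ℕ → ℕ → ℕ) :
    (cornerSumMatrix n C)ᵀ = cornerSumMatrix n (Function.swap C) :=
  Matrix.ext fun i j ↦ (mixedDiff_swap C i j).symm

variable {n : ℕ}

namespace IsCornerSum

variable {C : ℕ → ℕ → ℕ}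

theorem sum_range_mixedDiff (hC : IsCornerSum n C) (i j : ℕ) :
    ∑ b ∈ range j, mixedDiff C i b = C (i + 1) j - C i j := by
  simp only [mixedDiff, sum_range_sub fun b ↦ (C (i + 1) b - C i b : ℤ), hC.zero_right, sub_self,
    sub_zero]

theorem cornerSum_mixedDiff (hC : IsCornerSum n C) (i j : ℕ) :
    cornerSum (mixedDiff C) i j = C i j := by
  simp only [cornerSum, hC.sum_range_mixedDiff, sum_range_sub fun a ↦ (C a j : ℤ), hC.zero_left,
    Nat.cast_zero, sub_zero]

theorem identityExtension_cornerSumMatrix (hC : IsCornerSum n C) :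
    identityExtension (cornerSumMatrix n C) = mixedDiff C := by
  funext a b
  by_cases hin : a < n ∧ b < n
  · exact dif_pos hin
  · rw [identityExtension_of_not_lt _ hin, mixedDiff, hC.eq_min a b (by omega),
      hC.eq_min (a + 1) b (by omega), hC.eq_min a (b + 1) (by omega),
      hC.eq_min (a + 1) (b + 1) (by omega)]
    split_ifs <;> omega

theorem mixedDiff_eq_neg_one_or_zero_or_one (hC : IsCornerSum n C) (i j : ℕ) :
    mixedDiff C i j = -1 ∨ mixedDiff C i j = 0 ∨ mixedDiff C i j = 1 := by
  have := hC.le_succ_left i j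
  have := hC.succ_left_le i j
  have := hC.le_succ_left i (j + 1)
  have := hC.succ_left_le i (j + 1)
  rw [mixedDiff]
  omega

theorem isAlternating_mixedDiff (hC : IsCornerSum n C) (i : ℕ) : IsAlternating (mixedDiff C i) := by
  refine isAlternating_of_sum_range_mem_Icc fun j ↦ ?_
  have := hC.le_succ_left i j
  have := hC.succ_left_le i j
  rw [hC.sum_range_mixedDiff, Set.mem_Icc]
  omega

theorem sum_row_cornerSumMatrix (hC : IsCornerSum n C) (i : Fin n) :
    ∑ j, cornerSumMatrix n C i j = 1 := by
  have := i.2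
  calc ∑ j, cornerSumMatrix n C i j = ∑ b ∈ range n, mixedDiff C i b :=
        Fin.sum_univ_eq_sum_range (mixedDiff C i) n
    _ = 1 := by
        rw [hC.sum_range_mixedDiff, hC.eq_min _ n (.inr le_rfl), hC.eq_min _ n (.inr le_rfl)]
        omega

theorem row_cornerSumMatrix_alternates (hC : IsCornerSum n C) (i j₁ j₂ : Fin n) (hlt : j₁ < j₂)
    (h₁ : cornerSumMatrix n C i j₁ ≠ 0) (h₂ : cornerSumMatrix n C i j₂ ≠ 0)
    (hbetween : ∀ j, j₁ < j → j < j₂ → cornerSumMatrix n C i j = 0) :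
    cornerSumMatrix n C i j₂ = -cornerSumMatrix n C i j₁ :=
  hC.isAlternating_mixedDiff i hlt h₁ h₂ fun c h₁c hc₂ ↦ hbetween ⟨c, hc₂.trans j₂.2⟩ h₁c hc₂

theorem isASM_cornerSumMatrix (hC : IsCornerSum n C) : IsASM (cornerSumMatrix n C) := by
  have hsum := hC.swap.sum_row_cornerSumMatrix
  have halt := hC.swap.row_cornerSumMatrix_alternates
  rw [← transpose_cornerSumMatrix] at hsum halt
  exact ⟨fun i j ↦ hC.mixedDiff_eq_neg_one_or_zero_or_one i j, hC.sum_row_cornerSumMatrix, hsum,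
    hC.row_cornerSumMatrix_alternates, halt⟩

end IsCornerSum

theorem injOn_cornerSumMatrix (n : ℕ) : Set.InjOn (cornerSumMatrix n) {C | IsCornerSum n C} := by
  intro C hC C' hC' h
  funext i j
  rw [← Nat.cast_inj (R := ℤ), ← hC.cornerSum_mixedDiff, ← hC.identityExtension_cornerSumMatrix, h,
    hC'.identityExtension_cornerSumMatrix, hC'.cornerSum_mixedDiff]

namespace IsASM

variable {A : Matrix (Fin n) (Fin n) ℤ}

theorem cornerSum_identityExtension_of_le_right (hA : IsASM A) (i : ℕ) {j : ℕ} (hj : n ≤ j) :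
    cornerSum (identityExtension A) i j = min i j := by
  induction i with
  | zero => simp [cornerSum]
  | succ i ih =>
    rw [cornerSum_succ_left, ih, hA.sum_range_identityExtension i hj]
    split_ifs <;> omega

theorem cornerSum_identityExtension_transpose (A : Matrix (Fin n) (Fin n) ℤ) (i j : ℕ) :
    cornerSum (identityExtension Aᵀ) i j = cornerSum (identityExtension A) j i := by
  rw [← cornerSum_swap]
  simp only [cornerSum, identityExtension_transpose, Function.swap]

theorem cornerSum_identityExtension_nonneg (hA : IsASM A) (i j : ℕ) :
    0 ≤ cornerSum (identityExtension A) i j :=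
  sum_nonneg fun a _ ↦ (hA.sum_range_identityExtension_mem_Icc a j).1

theorem isCornerSum_of_forall_eq_cornerSum (hA : IsASM A) {C : ℕ → ℕ → ℕ}
    (hC : ∀ i j, (C i j : ℤ) = cornerSum (identityExtension A) i j) : IsCornerSum n C := by
  have row_step {A : Matrix (Fin n) (Fin n) ℤ} {C : ℕ → ℕ → ℕ} (hA : IsASM A)
      (hC : ∀ i j, (C i j : ℤ) = cornerSum (identityExtension A) i j) (i j : ℕ) :
      C i j ≤ C (i + 1) j ∧ C (i + 1) j ≤ C i j + 1 := by
    have hrow := Set.mem_Icc.mp (hA.sum_range_identityExtension_mem_Icc i j)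
    have hsucc := hC (i + 1) j
    rw [cornerSum_succ_left, ← hC] at hsucc
    omega
  have hswap (i j : ℕ) : (Function.swap C i j : ℤ) = cornerSum (identityExtension Aᵀ) i j := by
    rw [cornerSum_identityExtension_transpose, ← hC, Function.swap]
  refine ⟨fun i j ↦ (row_step hA hC i j).1, fun i j ↦ (row_step hA hC i j).2,
    fun i j ↦ (row_step hA.transpose hswap j i).1, fun i j ↦ (row_step hA.transpose hswap j i).2,
    fun i j h ↦ ?_⟩
  rw [← Nat.cast_inj (R := ℤ)]
  obtain hi | hj := h
  · rw [min_comm, ← hA.transpose.cornerSum_identityExtension_of_le_right j hi, ← hswap,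
      Function.swap]
  · rw [hC, hA.cornerSum_identityExtension_of_le_right i hj]

end IsASM

theorem surjOn_cornerSumMatrix (n : ℕ) :
    Set.SurjOn (cornerSumMatrix n) {C | IsCornerSum n C} {A | IsASM A} := by
  intro A hA
  have hC i j : ((cornerSum (identityExtension A) i j).toNat : ℤ) =
      cornerSum (identityExtension A) i j :=
    Int.toNat_of_nonneg (hA.cornerSum_identityExtension_nonneg i j)
  refine ⟨_, hA.isCornerSum_of_forall_eq_cornerSum hC, Matrix.ext fun i j ↦ ?_⟩
  rw [cornerSumMatrix, of_apply, mixedDiff_eq_of_forall_eq_cornerSum hC, identityExtension_fin]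

end CornerSumMatrix

section Xray

variable {n : ℕ} {C C' : ℕ → ℕ → ℕ}

theorem xray_succ (A : Matrix (Fin n) (Fin n) ℤ) (k : ℕ) :
    xray A (k + 1) = ∑ p ∈ antidiagonal k with p.1 < n ∧ p.2 < n, identityExtension A p.1 p.2 := by
  rw [xray, ← Fintype.sum_prod_type', ← sum_filter]
  refine sum_bij (fun p _ ↦ (p.1, p.2)) (fun p hp ↦ ?_) (fun p _ q _ hpq ↦ ?_)
    (fun p hp ↦ ?_) fun p _ ↦ (identityExtension_fin A p.1 p.2).symm
  · simpa using hp
  · rwa [Prod.mk_inj, Fin.val_inj, Fin.val_inj, ← Prod.ext_iff] at hpq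
  · rw [mem_filter, HasAntidiagonal.mem_antidiagonal] at hp
    exact ⟨(⟨p.1, hp.2.1⟩, ⟨p.2, hp.2.2⟩), by simp [hp.1], rfl⟩

theorem antidiagSum_identityExtension (A : Matrix (Fin n) (Fin n) ℤ) (k : ℕ) :
    antidiagSum (identityExtension A) k = xray A (k + 1) +
      ∑ p ∈ antidiagonal k with ¬(p.1 < n ∧ p.2 < n), if p.1 = p.2 then 1 else 0 := by
  rw [antidiagSum, xray_succ, ← sum_filter_add_sum_filter_not _ fun p ↦ p.1 < n ∧ p.2 < n]
  exact congrArg _ (sum_congr rfl fun p hp ↦ identityExtension_of_not_lt A (mem_filter.mp hp).2)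

theorem forall_xray_eq_iff (A B : Matrix (Fin n) (Fin n) ℤ) :
    (∀ k, xray B k = xray A k) ↔
      ∀ k, antidiagSum (identityExtension B) k = antidiagSum (identityExtension A) k := by
  simp only [antidiagSum_identityExtension, add_left_inj]
  refine ⟨fun h k ↦ h (k + 1), fun h k ↦ ?_⟩
  rcases k with _ | k
  · simp [xray]
  · exact h k

theorem IsCornerSum.antidiagSum_mixedDiff (hC : IsCornerSum n C) (k : ℕ) :
    antidiagSum (mixedDiff C) k =
      antidiagSum C (k + 2) - 2 * antidiagSum C (k + 1) + antidiagSum C k := by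
  have hright : antidiagSum C (k + 1) = ∑ p ∈ antidiagonal k, C p.1 (p.2 + 1) := by
    rw [antidiagSum, Nat.sum_antidiagonal_succ', hC.zero_right, zero_add]
  have hleft (k : ℕ) : antidiagSum C (k + 1) = ∑ p ∈ antidiagonal k, C (p.1 + 1) p.2 := by
    rw [antidiagSum, Nat.sum_antidiagonal_succ, hC.zero_left, zero_add]
  have hboth : antidiagSum C (k + 2) = ∑ p ∈ antidiagonal k, C (p.1 + 1) (p.2 + 1) := by
    rw [hleft, Nat.sum_antidiagonal_succ', hC.zero_right, zero_add]
  rw [two_mul, hboth]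
  nth_rw 1 [hright]
  rw [hleft]
  simp only [antidiagSum, mixedDiff, Nat.cast_sum, sum_sub_distrib]
  ring

theorem IsCornerSum.forall_antidiagSum_mixedDiff_eq_iff (hC : IsCornerSum n C)
    (hC' : IsCornerSum n C') :
    (∀ k, antidiagSum (mixedDiff C') k = antidiagSum (mixedDiff C) k) ↔
      ∀ k, antidiagSum C' k = antidiagSum C k := by
  simp only [hC.antidiagSum_mixedDiff, hC'.antidiagSum_mixedDiff]
  refine ⟨fun h k ↦ ?_, fun h k ↦ by simp only [h]⟩
  induction k using Nat.twoStepInduction with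
  | zero => simp [antidiagSum, hC.zero_left, hC'.zero_left]
  | one =>
    simp [antidiagSum, Nat.sum_antidiagonal_succ, hC.zero_left, hC'.zero_left, hC.zero_right,
      hC'.zero_right]
  | more k ih ih_succ =>
    have := h k
    omega

theorem IsCornerSum.determinedByXray_cornerSumMatrix_iff (hC : IsCornerSum n C) :
    DeterminedByXray (cornerSumMatrix n C) ↔ DeterminedByAntidiagSum n C := by
  have xray_iff {C'} (hC' : IsCornerSum n C') :
      (∀ k, xray (cornerSumMatrix n C') k = xray (cornerSumMatrix n C) k) ↔
        ∀ k, antidiagSum C' k = antidiagSum C k := by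
    rw [forall_xray_eq_iff, hC'.identityExtension_cornerSumMatrix,
      hC.identityExtension_cornerSumMatrix, hC.forall_antidiagSum_mixedDiff_eq_iff hC']
  constructor
  · intro h C' hC' hsum
    exact injOn_cornerSumMatrix n hC' hC (h _ hC'.isASM_cornerSumMatrix ((xray_iff hC').mpr hsum))
  · intro h B hB hxray
    obtain ⟨C', hC', rfl⟩ := surjOn_cornerSumMatrix n hB
    rw [h C' hC' ((xray_iff hC').mp hxray)]

theorem bijOn_cornerSumMatrix (n : ℕ) :
    Set.BijOn (cornerSumMatrix n) {C | IsCornerSum n C ∧ DeterminedByAntidiagSum n C}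
      {A | IsASM A ∧ DeterminedByXray A} := by
  refine ⟨fun C ⟨hC, hdet⟩ ↦ ⟨hC.isASM_cornerSumMatrix,
    hC.determinedByXray_cornerSumMatrix_iff.mpr hdet⟩,
    (injOn_cornerSumMatrix n).mono fun C hC ↦ hC.1, ?_⟩
  rintro A ⟨hA, hdet⟩
  obtain ⟨C, hC, rfl⟩ := surjOn_cornerSumMatrix n hA
  exact ⟨C, ⟨hC, hC.determinedByXray_cornerSumMatrix_iff.mp hdet⟩, rfl⟩

end Xray

theorem ncard_setOf_semilength_eq (n : ℕ) :
    {p : DyckWord | p.semilength = n}.ncard = catalan n := by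
  rw [← DyckWord.card_dyckWord_semilength_eq_catalan, ← Nat.card_eq_fintype_card]
  rfl

theorem stmt_12 (n : ℕ) :
    Set.ncard {A : Matrix (Fin n) (Fin n) ℤ | IsASM A ∧ DeterminedByXray A} =
      (2 * n).choose n / (n + 1) := by
  have hbij := (bijOn_cornerSumMatrix n).comp <|
    (bijOn_profileCornerSum n).comp (bijOn_downProfile n)
  rw [← hbij.ncard_eq, ncard_setOf_semilength_eq, catalan_eq_centralBinom_div, Nat.centralBinom]
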